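/- Let k > 470, n ≥ k+1, and suppose L_n^{(k)} = a·(10^{d1}−1)/9 + (b−a)·10^{d2} with integers 0 ≤ d2 < d1, d1 ≥ 3, 1 ≤ a ≤ 9, 0 ≤ b ≤ 9, and n < 2^{k/2}. Then |27·2^{n−2}·10^{−d1}/a − 1| < 2^{−λ}, where λ = min{ k/2 − 5 , (d1 − d2)·(log 10/log 2) − 8 }. -/

import Mathlib

/-- Shifted `k`-generalized Lucas sequence: `genLucas k m` equals `L^{(k)}_{m - (k-2)}`,
so that index `m = 0` corresponds to `n = 2 - k`.  The initial values are
`L^{(k)}_{2-k} = ⋯ = L^{(k)}_{-1} = 0`, `L^{(k)}_0 = 2`, `L^{(k)}_1 = 1`, and each term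
afterwards is the sum of the `k` preceding terms. -/
def genLucas (k : ℕ) : ℕ → ℤ := fun m =>
  if h1 : m < k - 2 then 0
  else if h2 : m = k - 2 then 2
  else if h3 : m = k - 1 then 1
  else ∑ i ∈ Finset.range k, genLucas k (m - 1 - i)
decreasing_by omega

/-- The `k`-generalized Lucas number `L^{(k)}_n` for `n ≥ 0`. -/
def lucasL (k n : ℕ) : ℤ := genLucas k (n + k - 2)

/-!
Subtracting consecutive instances of the recurrence gives `L_{n+1} = 2 L_n - L_{n-k}`.  Since
`L_{n-k} ≤ 2^(n-k+1)`, the sequence loses only `O(n / 2^k)` relative to doubling, so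
`L_n = 3 · 2^(n-2) (1 + ζ)` with `|ζ| ≤ (4/3) 2^(-k/2)` when `n < 2^(k/2)`.  On the decimal side,
`9 L_n = a · 10^d₁ (1 + e)` with `|e| ≤ 73 · 10^(d₂-d₁)`, because `|b - a| ≤ 8a`.

Hence `x = 27 · 2^(n-2) / (a · 10^d₁)` satisfies `x (1 + ζ) = 1 + e`.  As `|ζ| ≤ 2/3`, this gives
`|x - 1| ≤ 3 (|ζ| + |e|) ≤ 4 · 2^(-k/2) + 219 · 10^(d₂-d₁)`, which is smaller than
`2^(-λ) = max (32 · 2^(-k/2)) (256 · 10^(d₂-d₁))` since `4/32 + 219/256 < 1`.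
-/

section GenLucas

variable {k m : ℕ}

theorem genLucas_of_lt (hm : m < k - 2) : genLucas k m = 0 := by
  rw [genLucas, dif_pos hm]

theorem genLucas_sub_two (k : ℕ) : genLucas k (k - 2) = 2 := by
  rw [genLucas, dif_neg (by omega), dif_pos rfl]

theorem genLucas_sub_one (hk : 2 ≤ k) : genLucas k (k - 1) = 1 := by
  rw [genLucas, dif_neg (by omega), dif_neg (by omega), dif_pos rfl]

theorem genLucas_eq_sum (hk : 0 < k) (hm : k ≤ m) :
    genLucas k m = ∑ i ∈ Finset.range k, genLucas k (m - 1 - i) := by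
  rw [genLucas, dif_neg (by omega), dif_neg (by omega), dif_neg (by omega)]

theorem genLucas_nonneg (k m : ℕ) : 0 ≤ genLucas k m := by
  induction m using Nat.strong_induction_on with
  | _ m ih =>
    rw [genLucas]
    split_ifs
    · rfl
    · norm_num
    · norm_num
    · exact Finset.sum_nonneg fun i _ => ih _ (by omega)

theorem genLucas_self (hk : 2 ≤ k) : genLucas k k = 3 := by
  obtain ⟨q, rfl⟩ := Nat.exists_eq_add_of_le' hk
  have h_zero : ∑ i ∈ Finset.range q, genLucas (q + 2) i = 0 :=
    Finset.sum_eq_zero fun i hi => genLucas_of_lt (Finset.mem_range.mp hi)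
  have h_two : genLucas (q + 2) q = 2 := genLucas_sub_two (q + 2)
  have h_one : genLucas (q + 2) (q + 1) = 1 := genLucas_sub_one hk
  rw [genLucas_eq_sum (by omega) le_rfl,
    Finset.sum_range_reflect (fun i => genLucas (q + 2) i), Finset.sum_range_succ,
    Finset.sum_range_succ, h_zero, h_two, h_one]
  norm_num

-- The windows of `k` terms summed by two consecutive instances of the recurrence differ only in
-- their end terms.
theorem genLucas_add_succ (hk : 0 < k) (j : ℕ) :
    genLucas k (k + (j + 1)) = 2 * genLucas k (k + j) - genLucas k j := by
  have h_next : genLucas k (k + (j + 1)) = ∑ i ∈ Finset.range k, genLucas k (k + j - i) :=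
    genLucas_eq_sum hk (by omega)
  have h_prev : genLucas k (k + j) = ∑ i ∈ Finset.range k, genLucas k (k + j - (i + 1)) := by
    rw [genLucas_eq_sum hk (by omega)]
    exact Finset.sum_congr rfl fun i _ => by rw [Nat.sub_sub, Nat.add_comm 1 i]
  have h_window := (Finset.sum_range_succ (fun i => genLucas k (k + j - i)) k).symm.trans
    (Finset.sum_range_succ' (fun i => genLucas k (k + j - i)) k)
  rw [← h_next, ← h_prev, Nat.add_sub_cancel_left, Nat.sub_zero] at h_window
  linarith

theorem genLucas_add_le (hk : 2 ≤ k) (j : ℕ) : genLucas k (k + j) ≤ 3 * 2 ^ j := by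
  induction j with
  | zero => simp [genLucas_self hk]
  | succ j ih =>
    rw [genLucas_add_succ (by omega), pow_succ]
    linarith [genLucas_nonneg k j]

theorem two_pow_mul_genLucas_le (hk : 2 ≤ k) (m : ℕ) : 2 ^ k * genLucas k m ≤ 8 * 2 ^ m := by
  obtain hm | rfl | rfl | hm : m < k - 2 ∨ m = k - 2 ∨ m = k - 1 ∨ k ≤ m := by omega
  · rw [genLucas_of_lt hm]
    positivity
  · rw [genLucas_sub_two, ← pow_sub_mul_pow (2 : ℤ) hk]
    linarith
  · rw [genLucas_sub_one hk, ← pow_sub_mul_pow (2 : ℤ) (show 1 ≤ k by omega)]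
    linarith [pow_pos (two_pos : (0 : ℤ) < 2) (k - 1)]
  · obtain ⟨j, rfl⟩ := Nat.exists_eq_add_of_le hm
    calc 2 ^ k * genLucas k (k + j) ≤ 2 ^ k * (3 * 2 ^ j) := by
          gcongr
          exact genLucas_add_le hk j
      _ = 3 * 2 ^ (k + j) := by ring
      _ ≤ 8 * 2 ^ (k + j) := by gcongr; norm_num

theorem two_pow_mul_sub_genLucas_le (hk : 2 ≤ k) (j : ℕ) :
    2 ^ k * (3 * 2 ^ j - genLucas k (k + j)) ≤ 4 * j * 2 ^ j := by
  induction j with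
  | zero => simp [genLucas_self hk]
  | succ j ih =>
    rw [genLucas_add_succ (by omega), pow_succ]
    push_cast
    linarith [two_pow_mul_genLucas_le hk j]

end GenLucas

section LucasZeta

variable {k n : ℕ}

theorem lucasL_eq_genLucas (k : ℕ) (hn : 2 ≤ n) : lucasL k n = genLucas k (k + (n - 2)) := by
  rw [lucasL, Nat.add_comm n k, Nat.add_sub_assoc hn]

/-- The relative error `ζ(n, k)` of the approximation `L_n^{(k)} ≈ 3 · 2^(n - 2)`.  The exponent is
a natural number subtraction, so that only `2 ≤ n` is meaningful. -/
noncomputable def lucasZeta (k n : ℕ) : ℝ := lucasL k n / (3 * 2 ^ (n - 2)) - 1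

theorem lucasL_eq_mul_one_add_lucasZeta (k n : ℕ) :
    (lucasL k n : ℝ) = 3 * 2 ^ (n - 2) * (1 + lucasZeta k n) := by
  rw [lucasZeta]
  field_simp
  ring

theorem lucasZeta_nonpos (hk : 2 ≤ k) (hn : 2 ≤ n) : lucasZeta k n ≤ 0 := by
  have h_le : (lucasL k n : ℝ) ≤ 3 * 2 ^ (n - 2) := by
    rw [lucasL_eq_genLucas k hn]
    exact_mod_cast genLucas_add_le hk (n - 2)
  rw [lucasZeta, sub_nonpos]
  exact div_le_one_of_le₀ h_le (by positivity)

theorem abs_lucasZeta_le (hk : 2 ≤ k) (hn : 2 ≤ n) :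
    |lucasZeta k n| ≤ 4 / 3 * (n - 2) / 2 ^ k := by
  have h_deficit : (2 : ℝ) ^ k * (3 * 2 ^ (n - 2) - lucasL k n) ≤
      4 * (n - 2 : ℕ) * 2 ^ (n - 2) := by
    rw [lucasL_eq_genLucas k hn]
    exact_mod_cast two_pow_mul_sub_genLucas_le hk (n - 2)
  rw [lucasL_eq_mul_one_add_lucasZeta, Nat.cast_sub hn, Nat.cast_ofNat] at h_deficit
  rw [abs_of_nonpos (lucasZeta_nonpos hk hn), le_div_iff₀ (by positivity)]
  refine le_of_mul_le_mul_right ?_ (show (0 : ℝ) < 3 * 2 ^ (n - 2) by positivity)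
  linarith

theorem two_lt_of_lt_two_rpow_half (hn : 2 ≤ n) (hnk : (n : ℝ) < 2 ^ ((k : ℝ) / 2)) : 2 < k := by
  have h_rpow : (2 : ℝ) ^ (1 : ℝ) < 2 ^ ((k : ℝ) / 2) := by
    rw [Real.rpow_one]
    exact lt_of_le_of_lt (by exact_mod_cast hn) hnk
  have h_half : (1 : ℝ) < k / 2 := (Real.rpow_lt_rpow_left_iff one_lt_two).mp h_rpow
  have h_real : (2 : ℝ) < k := by linarith
  exact_mod_cast h_real

theorem abs_lucasZeta_le_two_rpow (hn : 2 ≤ n) (hnk : (n : ℝ) < 2 ^ ((k : ℝ) / 2)) :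
    |lucasZeta k n| ≤ 4 / 3 * 2 ^ (-((k : ℝ) / 2)) := by
  calc |lucasZeta k n| ≤ 4 / 3 * (n - 2) / 2 ^ k :=
        abs_lucasZeta_le (two_lt_of_lt_two_rpow_half hn hnk).le hn
    _ ≤ 4 / 3 * 2 ^ ((k : ℝ) / 2) / 2 ^ (k : ℝ) := by
        rw [Real.rpow_natCast]
        gcongr
        linarith
    _ = 4 / 3 * 2 ^ (-((k : ℝ) / 2)) := by
        rw [mul_div_assoc, ← Real.rpow_sub two_pos]
        ring_nf

end LucasZeta

theorem sub_one_mul_repdigit_add (B a c : ℤ) (d₁ d₂ : ℕ) :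
    (B - 1) * (a * ((B ^ d₁ - 1) / (B - 1)) + c * B ^ d₂) =
      a * B ^ d₁ + ((B - 1) * c * B ^ d₂ - a) := by
  have h_div : (B - 1) * ((B ^ d₁ - 1) / (B - 1)) = B ^ d₁ - 1 :=
    Int.mul_ediv_cancel' (sub_one_dvd_pow_sub_one B d₁)
  linear_combination a * h_div

theorem abs_sub_one_mul_div_sub_one_le_of_eq_repdigit_add {B a c C N : ℤ} {d₁ d₂ : ℕ}
    (hB : 1 ≤ B) (ha : 0 < a) (hc : |c| ≤ C * a)
    (hN : N = a * ((B ^ d₁ - 1) / (B - 1)) + c * B ^ d₂) :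
    |((B : ℝ) - 1) * N / (a * B ^ d₁) - 1| ≤
      ((B - 1) * C + 1) * ((B : ℝ) ^ d₂ / B ^ d₁) := by
  have hB_pos : (0 : ℝ) < B := by exact_mod_cast one_pos.trans_le hB
  have ha_pos : (0 : ℝ) < a := by exact_mod_cast ha
  have h_num : |(B - 1) * N - a * B ^ d₁| ≤ ((B - 1) * C + 1) * (a * B ^ d₂) := by
    have h_pow : 1 ≤ B ^ d₂ := one_le_pow₀ hB
    have hB_sub : 0 ≤ B - 1 := sub_nonneg.mpr hB
    calc |(B - 1) * N - a * B ^ d₁| = |(B - 1) * c * B ^ d₂ - a| := by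
          rw [hN, sub_one_mul_repdigit_add, add_sub_cancel_left]
      _ ≤ |(B - 1) * c * B ^ d₂| + |a| := abs_sub _ _
      _ = (B - 1) * |c| * B ^ d₂ + a := by
          rw [abs_mul, abs_mul, abs_of_nonneg hB_sub,
            abs_of_nonneg (zero_le_one.trans h_pow), abs_of_pos ha]
      _ ≤ (B - 1) * (C * a) * B ^ d₂ + a * B ^ d₂ := by
          gcongr
          exact le_mul_of_one_le_right ha.le h_pow
      _ = ((B - 1) * C + 1) * (a * B ^ d₂) := by ring
  have h_denom : (0 : ℝ) < a * B ^ d₁ := mul_pos ha_pos (pow_pos hB_pos d₁)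
  rw [div_sub_one h_denom.ne', abs_div, abs_of_pos h_denom, div_le_iff₀ h_denom]
  calc |((B : ℝ) - 1) * N - a * B ^ d₁| ≤ ((B - 1) * C + 1) * (a * B ^ d₂) := by
        exact_mod_cast h_num
    _ = ((B - 1) * C + 1) * ((B : ℝ) ^ d₂ / B ^ d₁) * (a * B ^ d₁) := by field_simp

theorem abs_sub_one_mul_le_of_mul_one_add_eq {R : Type*} [CommRing R] [LinearOrder R]
    [IsStrictOrderedRing R] {x ζ y : R} (h : x * (1 + ζ) = y) :
    |x - 1| * (1 - |ζ|) ≤ |ζ| + |y - 1| := by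
  calc |x - 1| * (1 - |ζ|) ≤ |x - 1| * |1 + ζ| := by
        gcongr
        linarith [neg_abs_le ζ, le_abs_self (1 + ζ)]
    _ = |(y - 1) - ζ| := by
        rw [← abs_mul]
        congr 1
        linear_combination h
    _ ≤ |y - 1| + |ζ| := abs_sub _ _
    _ = |ζ| + |y - 1| := add_comm _ _

theorem rpow_neg_min {b : ℝ} (hb : 1 < b) (x y : ℝ) :
    b ^ (-min x y) = max (b ^ (-x)) (b ^ (-y)) := by
  rw [← max_neg_neg]
  exact (Real.strictMono_rpow_of_base_gt_one hb).monotone.map_max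

theorem rpow_mul_log_div_log {b c : ℝ} (hb : 0 < b) (hb₁ : b ≠ 1) (hc : 0 < c) (x : ℝ) :
    b ^ (x * (Real.log c / Real.log b)) = c ^ x := by
  rw [mul_comm, Real.rpow_mul hb.le, Real.log_div_log, Real.rpow_logb hb hb₁ hc]

theorem two_rpow_neg_lambda (k d₁ d₂ : ℕ) :
    (2 : ℝ) ^ (-min ((k : ℝ) / 2 - 5)
        (((d₁ : ℝ) - d₂) * (Real.log 10 / Real.log 2) - 8)) =
      max (32 * 2 ^ (-((k : ℝ) / 2))) (256 * (10 ^ d₂ / 10 ^ d₁)) := by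
  have h_log : (2 : ℝ) ^ (((d₂ : ℝ) - d₁) * (Real.log 10 / Real.log 2)) = 10 ^ d₂ / 10 ^ d₁ := by
    rw [rpow_mul_log_div_log two_pos (by norm_num) (by norm_num), Real.rpow_sub (by norm_num),
      Real.rpow_natCast, Real.rpow_natCast]
  rw [rpow_neg_min one_lt_two, ← h_log]
  congr 1
  · rw [neg_sub, sub_eq_add_neg, Real.rpow_add two_pos]
    norm_num
  · rw [neg_sub, sub_eq_add_neg, Real.rpow_add two_pos, ← neg_mul, neg_sub]
    norm_num

theorem lambda3_bound_general (k n : ℕ) (hn : 2 ≤ n) (d1 d2 : ℕ) (a b : ℤ) (ha : 0 < a)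
    (hab : |b - a| ≤ 8 * a)
    (heq : lucasL k n = a * ((10 ^ d1 - 1) / 9) + (b - a) * 10 ^ d2)
    (hn2k : (n : ℝ) < (2 : ℝ) ^ ((k : ℝ) / 2)) :
    |27 * (2 : ℝ) ^ (n - 2) / 10 ^ d1 / (a : ℝ) - 1|
      < (2 : ℝ) ^ (-(min ((k : ℝ) / 2 - 5)
          (((d1 : ℝ) - (d2 : ℝ)) * (Real.log 10 / Real.log 2) - 8))) := by
  have h_zeta := abs_lucasZeta_le_two_rpow hn hn2k
  have h_half : (2 : ℝ) ^ (-((k : ℝ) / 2)) ≤ 1 / 2 := by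
    rw [Real.rpow_neg two_pos.le, one_div]
    exact inv_anti₀ two_pos (le_trans (by exact_mod_cast hn) hn2k.le)
  have h_digits : |9 * (lucasL k n : ℝ) / (a * 10 ^ d1) - 1| ≤ 73 * (10 ^ d2 / 10 ^ d1) := by
    have h := abs_sub_one_mul_div_sub_one_le_of_eq_repdigit_add (B := 10) (by norm_num) ha hab heq
    convert h using 1 <;> norm_num
  have h_prod : 27 * (2 : ℝ) ^ (n - 2) / 10 ^ d1 / a * (1 + lucasZeta k n) =
      9 * lucasL k n / (a * 10 ^ d1) := by
    rw [lucasL_eq_mul_one_add_lucasZeta]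
    field_simp
    ring
  have h_le : |27 * (2 : ℝ) ^ (n - 2) / 10 ^ d1 / a - 1| ≤
      4 * 2 ^ (-((k : ℝ) / 2)) + 219 * (10 ^ d2 / 10 ^ d1) := by
    have h_third : (1 / 3 : ℝ) ≤ 1 - |lucasZeta k n| := by linarith
    have h_mul := mul_le_mul_of_nonneg_left h_third
      (abs_nonneg (27 * (2 : ℝ) ^ (n - 2) / 10 ^ d1 / a - 1))
    linarith [abs_sub_one_mul_le_of_mul_one_add_eq h_prod]
  rw [two_rpow_neg_lambda]
  have h_pos : (0 : ℝ) < 2 ^ (-((k : ℝ) / 2)) := by positivity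
  linarith [le_max_left (32 * (2 : ℝ) ^ (-((k : ℝ) / 2))) (256 * (10 ^ d2 / 10 ^ d1)),
    le_max_right (32 * (2 : ℝ) ^ (-((k : ℝ) / 2))) (256 * (10 ^ d2 / 10 ^ d1))]

/-- For `k > 470` and `n < 2^{k/2}`, the bound `|27·2^{n-2}·10^{-d1}/a - 1| < 2^{-λ}`
holds, where `λ = min(k/2 - 5, (d1-d2)·log 10/log 2 - 8)`. -/
theorem lambda3_bound (k n : ℕ) (hk : 470 < k) (hnk : k + 1 ≤ n)
    (d1 d2 : ℕ) (a b : ℤ) (hd : d2 < d1) (hd1 : 3 ≤ d1)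
    (ha1 : 1 ≤ a) (ha9 : a ≤ 9) (hb0 : 0 ≤ b) (hb9 : b ≤ 9)
    (heq : lucasL k n = a * ((10 ^ d1 - 1) / 9) + (b - a) * 10 ^ d2)
    (hn2k : (n : ℝ) < (2 : ℝ) ^ ((k : ℝ) / 2)) :
    |27 * (2 : ℝ) ^ (n - 2) / 10 ^ d1 / (a : ℝ) - 1|
      < (2 : ℝ) ^ (-(min ((k : ℝ) / 2 - 5)
          (((d1 : ℝ) - (d2 : ℝ)) * (Real.log 10 / Real.log 2) - 8))) := by
  exact lambda3_bound_general k n (by omega) d1 d2 a b ha1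
    (abs_le.mpr ⟨by linarith, by linarith⟩) heq hn2k
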